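/- Fix c > 0. Define μ : ℝ → ℝ by μ(x) = 1/(2c+2) if |x| ≤ c and μ(x) = e^{−(|x|−c)}/(2c+2) if |x| > c, and define the transition density Π : ℝ × ℝ → ℝ, where Π(y, x) is the density of the next state x given current state y, by: Π(y, x) = (1/2)·e^{−|x−y|} if |y| ≤ c; Π(y, x) = e^{−(x−y)}·1_{x > y} if y < −c; and Π(y, x) = e^{−(y−x)}·1_{x < y} if y > c. Then μ is a probability density (μ ≥ 0 and ∫_ℝ μ(x) dx = 1) and μ is stationary for Π: for every x ∈ ℝ, ∫_ℝ Π(y, x)·μ(y) dy = μ(x). -/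

import Mathlib

open MeasureTheory

/-- The stationary density: `1/(2c+2)` on `[-c, c]` and `e^{-(|x|-c)}/(2c+2)` outside. -/
noncomputable def statDens (c : ℝ) (x : ℝ) : ℝ :=
  if |x| ≤ c then 1 / (2 * c + 2) else Real.exp (-(|x| - c)) / (2 * c + 2)

/-- The transition density `Π(y, x)`: density of the next state `x` given the current
state `y`.  From `|y| ≤ c` the increment is `E₁ - E₂`; from `y < -c` it is `+E₁`; from
`y > c` it is `-E₁`, where `E₁, E₂` are independent rate-one exponentials. -/
noncomputable def transDens (c : ℝ) (y x : ℝ) : ℝ :=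
  if |y| ≤ c then (1 / 2) * Real.exp (-|x - y|)
  else if y < -c then (if y < x then Real.exp (-(x - y)) else 0)
  else (if x < y then Real.exp (-(y - x)) else 0)

/-!
Since `E₁ - E₂` has the Laplace law, every step of the chain goes up by a rate-one exponential
with probability `p y` and down by one otherwise, where `p = 1, 1/2, 0` on the three regions. The
density `μ` satisfies `μ' = (2p - 1) μ`, that is, `(e^y μ / 2)' = e^y p μ`. Integrating from `-∞`
to `x` shows that the mass arriving at `x` from below is exactly `μ x / 2`; by reflection so is
the mass arriving from above.
-/

section

open Real Set Filter Topology

theorem integral_Iic_of_hasDerivAt_off_countable_of_tendsto {E : Type*} [NormedAddCommGroup E]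
    [NormedSpace ℝ E] [CompleteSpace E] {f f' : ℝ → E} {a : ℝ} {m : E} {s : Set ℝ}
    (hs : s.Countable) (hcont : ContinuousOn f (Iic a))
    (hderiv : ∀ x ∈ Iio a \ s, HasDerivAt f (f' x) x) (f'int : IntegrableOn f' (Iic a))
    (hf : Tendsto f atBot (𝓝 m)) : ∫ x in Iic a, f' x = f a - m := by
  refine tendsto_nhds_unique (intervalIntegral_tendsto_integral_Iic a f'int tendsto_id)
    ((hf.const_sub (f a)).congr' ?_)
  filter_upwards [Iic_mem_atBot a] with b hb
  refine (integral_eq_of_hasDerivAt_off_countable_of_le f f' hb hs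
    (hcont.mono Icc_subset_Iic_self) (fun x hx => hderiv x ⟨hx.1.2, hx.2⟩) ?_).symm
  exact (intervalIntegrable_iff_integrableOn_Ioc_of_le hb).2 (f'int.mono_set Ioc_subset_Iic_self)

/-- Transition density from `y` to `x` of the chain whose step goes up by a rate-one exponential
with probability `p y` and down by one otherwise. The value at `x = y` is an arbitrary choice. -/
noncomputable def expJumpDens (p : ℝ → ℝ) (y x : ℝ) : ℝ :=
  if y ≤ x then p y * exp (-(x - y)) else (1 - p y) * exp (-(y - x))

/-- The differential form `ρ' = (2p - 1) ρ` of stationarity of a bounded function `ρ` for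
`expJumpDens p`. The equation may fail on a countable set so that `p` is allowed to jump. -/
structure IsExpJumpBalanced (p ρ : ℝ → ℝ) : Prop where
  measurable : Measurable p
  mem_Icc : ∀ y, p y ∈ Icc (0 : ℝ) 1
  continuous : Continuous ρ
  bounded : ∃ C, ∀ y, ‖ρ y‖ ≤ C
  hasDerivAt : ∃ s : Set ℝ, s.Countable ∧ ∀ y ∉ s, HasDerivAt ρ ((2 * p y - 1) * ρ y) y

namespace IsExpJumpBalanced

variable {p ρ : ℝ → ℝ}

theorem comp_neg (h : IsExpJumpBalanced p ρ) :
    IsExpJumpBalanced (fun y => 1 - p (-y)) (fun y => ρ (-y)) where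
  measurable := (h.measurable.comp measurable_neg).const_sub 1
  mem_Icc y := by
    obtain ⟨h0, h1⟩ := h.mem_Icc (-y)
    exact ⟨by linarith, by linarith⟩
  continuous := h.continuous.comp continuous_neg
  bounded := h.bounded.imp fun _ hC y => hC (-y)
  hasDerivAt := by
    obtain ⟨s, hs, hderiv⟩ := h.hasDerivAt
    refine ⟨Neg.neg ⁻¹' s, hs.preimage neg_injective, fun y hy => ?_⟩
    refine ((hderiv (-y) hy).comp y (hasDerivAt_neg y)).congr_deriv ?_
    ring

theorem integrableOn_Iic_up (h : IsExpJumpBalanced p ρ) (x : ℝ) :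
    IntegrableOn (fun y => p y * exp (-(x - y)) * ρ y) (Iic x) := by
  obtain ⟨C, hC⟩ := h.bounded
  have hexp : IntegrableOn (fun y => exp (-(x - y))) (Iic x) := by
    simp only [neg_sub, exp_sub]
    exact (integrableOn_exp_Iic x).div_const (exp x)
  have hp : ∀ y, ‖p y‖ ≤ 1 := fun y => by
    rw [norm_of_nonneg (h.mem_Icc y).1]
    exact (h.mem_Icc y).2
  exact (hexp.bdd_mul h.measurable.aestronglyMeasurable (.of_forall hp)).mul_bdd
    h.continuous.aestronglyMeasurable (.of_forall hC)

theorem integral_Iic_up (h : IsExpJumpBalanced p ρ) (x : ℝ) :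
    ∫ y in Iic x, p y * exp (-(x - y)) * ρ y = ρ x / 2 := by
  obtain ⟨C, hC⟩ := h.bounded
  obtain ⟨s, hs, hderiv⟩ := h.hasDerivAt
  have hexp : Tendsto (fun y => exp (-(x - y))) atBot (𝓝 0) := by
    simpa only [neg_sub, exp_sub, zero_div] using tendsto_exp_atBot.div_const (exp x)
  have hlim : Tendsto (fun y => exp (-(x - y)) * ρ y / 2) atBot (𝓝 0) := by
    simpa using (hexp.zero_mul_isBoundedUnder_le (isBoundedUnder_of ⟨C, hC⟩)).div_const 2
  have hprim : ∀ y ∈ Iio x \ s,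
      HasDerivAt (fun y => exp (-(x - y)) * ρ y / 2) (p y * exp (-(x - y)) * ρ y) y := by
    intro y hy
    have hexp' : HasDerivAt (fun y => exp (-(x - y))) (exp (-(x - y))) y := by
      simpa using ((hasDerivAt_id y).const_sub x).fun_neg.exp
    refine ((hexp'.mul (hderiv y hy.2)).div_const 2).congr_deriv ?_
    ring
  have hcont : Continuous (fun y => exp (-(x - y)) * ρ y / 2) := by
    have := h.continuous
    fun_prop
  simpa using integral_Iic_of_hasDerivAt_off_countable_of_tendsto hs hcont.continuousOn hprim
    (h.integrableOn_Iic_up x) hlim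

theorem integrableOn_Ioi_down (h : IsExpJumpBalanced p ρ) (x : ℝ) :
    IntegrableOn (fun y => (1 - p y) * exp (-(y - x)) * ρ y) (Ioi x) := by
  have hrefl := ((h.comp_neg.integrableOn_Iic_up (-x)).mono_set Iio_subset_Iic_self).comp_neg_Ioi
  simpa only [neg_neg, neg_sub_neg] using hrefl

theorem integral_Ioi_down (h : IsExpJumpBalanced p ρ) (x : ℝ) :
    ∫ y in Ioi x, (1 - p y) * exp (-(y - x)) * ρ y = ρ x / 2 := by
  have hrefl := h.comp_neg.integral_Iic_up (-x)
  rw [← integral_comp_neg_Ioi] at hrefl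
  simpa only [neg_neg, neg_sub_neg] using hrefl

theorem integral_expJumpDens_mul (h : IsExpJumpBalanced p ρ) (x : ℝ) :
    ∫ y, expJumpDens p y x * ρ y = ρ x := by
  have hup : EqOn (fun y => expJumpDens p y x * ρ y)
      (fun y => p y * exp (-(x - y)) * ρ y) (Iic x) := fun y hy => by
    simp only [expJumpDens, if_pos (mem_Iic.1 hy)]
  have hdown : EqOn (fun y => expJumpDens p y x * ρ y)
      (fun y => (1 - p y) * exp (-(y - x)) * ρ y) (Ioi x) := fun y hy => by
    simp only [expJumpDens, if_neg (mem_Ioi.1 hy).not_ge]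
  rw [← intervalIntegral.integral_Iic_add_Ioi
      ((h.integrableOn_Iic_up x).congr_fun hup.symm measurableSet_Iic)
      ((h.integrableOn_Ioi_down x).congr_fun hdown.symm measurableSet_Ioi),
    setIntegral_congr_fun measurableSet_Iic hup, setIntegral_congr_fun measurableSet_Ioi hdown,
    h.integral_Iic_up, h.integral_Ioi_down, add_halves]

end IsExpJumpBalanced

/-- The probability that the chain with transition density `transDens c` steps up from `y`. -/
noncomputable def upProb (c y : ℝ) : ℝ :=
  if |y| ≤ c then 1 / 2 else if y < -c then 1 else 0

theorem transDens_eq_expJumpDens (c : ℝ) {x y : ℝ} (hxy : y ≠ x) :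
    transDens c y x = expJumpDens (upProb c) y x := by
  unfold transDens expJumpDens upProb
  rcases hxy.lt_or_gt with h | h
  · rw [abs_of_pos (sub_pos.2 h), if_pos h, if_pos h.le, if_neg h.not_gt]
    split_ifs <;> simp
  · rw [abs_of_neg (sub_neg.2 h), if_neg h.not_gt, if_neg h.not_ge, if_pos h, neg_neg,
      ← neg_sub y x]
    split_ifs <;> norm_num

theorem measurable_upProb (c : ℝ) : Measurable (upProb c) :=
  Measurable.ite (measurableSet_le measurable_abs measurable_const) measurable_const
    (Measurable.ite measurableSet_Iio measurable_const measurable_const)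

theorem upProb_mem_Icc (c y : ℝ) : upProb c y ∈ Icc (0 : ℝ) 1 := by
  unfold upProb
  split_ifs <;> norm_num

theorem statDens_eq_exp_neg_max (c x : ℝ) :
    statDens c x = exp (-max (|x| - c) 0) / (2 * c + 2) := by
  unfold statDens
  split_ifs with h
  · rw [max_eq_right (sub_nonpos.2 h), neg_zero, exp_zero]
  · rw [max_eq_left (sub_nonneg.2 (not_le.1 h).le)]

theorem continuous_statDens (c : ℝ) : Continuous (statDens c) := by
  simp only [funext (statDens_eq_exp_neg_max c)]
  fun_prop

theorem statDens_nonneg {c : ℝ} (hc : -1 ≤ c) (x : ℝ) : 0 ≤ statDens c x := by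
  rw [statDens_eq_exp_neg_max]
  exact div_nonneg (exp_pos _).le (by linarith)

theorem norm_statDens_le (c x : ℝ) : ‖statDens c x‖ ≤ 1 / |2 * c + 2| := by
  rw [statDens_eq_exp_neg_max, norm_div, norm_of_nonneg (exp_pos _).le, Real.norm_eq_abs]
  gcongr
  exact exp_le_one_iff.2 (neg_nonpos.2 (le_max_right _ _))

theorem hasDerivAt_statDens_of_abs_lt {c y : ℝ} (hy : |y| < c) :
    HasDerivAt (statDens c) 0 y := by
  refine (hasDerivAt_const y (1 / (2 * c + 2))).congr_of_eventuallyEq ?_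
  filter_upwards [continuous_abs.continuousAt.eventually_lt continuousAt_const hy] with z hz
  rw [statDens, if_pos hz.le]

theorem hasDerivAt_statDens_of_lt_abs {c y : ℝ} (hy0 : y ≠ 0) (hy : c < |y|) :
    HasDerivAt (statDens c) (-SignType.sign y * statDens c y) y := by
  have hexp : HasDerivAt (fun z => exp (-(|z| - c)) / (2 * c + 2))
      (exp (-(|y| - c)) * -SignType.sign y / (2 * c + 2)) y :=
    ((hasDerivAt_abs hy0).sub_const c).fun_neg.exp.div_const _
  refine (hexp.congr_of_eventuallyEq ?_).congr_deriv ?_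
  · filter_upwards [continuousAt_const.eventually_lt continuous_abs.continuousAt hy] with z hz
    rw [statDens, if_neg hz.not_ge]
  · rw [statDens, if_neg hy.not_ge]
    ring

theorem hasDerivAt_statDens {c y : ℝ} (hc : 0 ≤ c) (hy : |y| ≠ c) :
    HasDerivAt (statDens c) ((2 * upProb c y - 1) * statDens c y) y := by
  rcases hy.lt_or_gt with hin | hout
  · exact (hasDerivAt_statDens_of_abs_lt hin).congr_deriv (by simp [upProb, hin.le])
  have hy0 : y ≠ 0 := abs_pos.1 (hc.trans_lt hout)
  refine (hasDerivAt_statDens_of_lt_abs hy0 hout).congr_deriv ?_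
  rw [upProb, if_neg hout.not_ge]
  rcases hy0.lt_or_gt with hneg | hpos
  · rw [abs_of_neg hneg] at hout
    rw [if_pos (lt_neg.1 hout), sign_neg hneg]
    norm_num
  · rw [if_neg (by linarith), sign_pos hpos]
    norm_num

theorem isExpJumpBalanced_statDens {c : ℝ} (hc : 0 ≤ c) :
    IsExpJumpBalanced (upProb c) (statDens c) where
  measurable := measurable_upProb c
  mem_Icc := upProb_mem_Icc c
  continuous := continuous_statDens c
  bounded := ⟨_, norm_statDens_le c⟩
  hasDerivAt := by
    refine ⟨{c, -c}, (toFinite _).countable, fun y hy => hasDerivAt_statDens hc fun h => hy ?_⟩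
    exact eq_or_eq_neg_of_abs_eq h

theorem integral_transDens_mul_statDens {c : ℝ} (hc : 0 ≤ c) (x : ℝ) :
    ∫ y, transDens c y x * statDens c y = statDens c x := by
  rw [← (isExpJumpBalanced_statDens hc).integral_expJumpDens_mul x]
  refine integral_congr_ae ?_
  filter_upwards [Measure.ae_ne volume x] with y hy
  rw [transDens_eq_expJumpDens c hy]

theorem integral_exp_neg_max_Ioi {c : ℝ} (hc : 0 ≤ c) :
    ∫ x in Ioi 0, exp (-max (x - c) 0) = c + 1 := by
  have hflat : EqOn (fun x => exp (-max (x - c) 0)) (fun _ => 1) (uIcc 0 c) := fun x hx => by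
    rw [uIcc_of_le hc] at hx
    simp [hx.2]
  have htail : EqOn (fun x => exp (-max (x - c) 0)) (fun x => exp c * exp (-x)) (Ioi c) :=
    fun x hx => by
      beta_reduce
      rw [max_eq_left (sub_nonneg.2 (mem_Ioi.1 hx).le), neg_sub, sub_eq_add_neg, exp_add]
  have htail_int : IntegrableOn (fun x => exp c * exp (-x)) (Ioi c) :=
    (integrableOn_exp_neg_Ioi c).const_mul _
  have hcont : Continuous (fun x => exp (-max (x - c) 0)) := by fun_prop
  rw [← intervalIntegral.integral_interval_add_Ioi' (hcont.intervalIntegrable 0 c)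
      (htail_int.congr_fun htail.symm measurableSet_Ioi),
    intervalIntegral.integral_congr hflat, setIntegral_congr_fun measurableSet_Ioi htail,
    integral_const_mul, integral_exp_neg_Ioi, ← exp_add]
  simp

theorem integral_statDens {c : ℝ} (hc : 0 ≤ c) : ∫ x, statDens c x = 1 := by
  simp only [statDens_eq_exp_neg_max, integral_div]
  rw [integral_comp_abs (f := fun x => exp (-max (x - c) 0)), integral_exp_neg_max_Ioi hc]
  field_simp

end

/-- `μ` is a probability density and is stationary for the kernel `Π`. -/
theorem stmt6 (c : ℝ) (hc : 0 < c) :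
    (∀ x, 0 ≤ statDens c x) ∧
    (∫ x, statDens c x = 1) ∧
    (∀ x, (∫ y, transDens c y x * statDens c y) = statDens c x) :=
  ⟨statDens_nonneg (by linarith), integral_statDens hc.le, integral_transDens_mul_statDens hc.le⟩
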